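/- Let E₂(q) = 1 − 24 Σ_{n=1}^∞ σ₁(n) qⁿ, and for |x| < 1 define D_{yz}(x) = Σ_{r≥1, s≥1} [ −(4r+4s−2) x^{32(2r−1)s} + (2r+2s) x^{64rs} ]. Then for every complex number x with |x| < 1, D_{yz}(x) = ( 1 + E₂(x^{32}) − 2 E₂(x^{64}) ) / 4. -/

import Mathlib

open scoped BigOperators

/-- The weight-2 Eisenstein series `E₂(q) = 1 − 24 Σ_{n=1}^∞ σ₁(n) qⁿ`. -/
noncomputable def E2 (q : ℂ) : ℂ :=
  1 - 24 * ∑' n : ℕ, (ArithmeticFunction.sigma 1 (n + 1) : ℂ) * q ^ (n + 1)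

/-- `D_{yz}(x) = Σ_{r,s≥1} [−(4r+4s−2) x^{32(2r−1)s} + (2r+2s) x^{64rs}]`,
which is `x⁴·d_{yz}(x)` for the coefficient `d_{yz}` of `y²z²` in the open
Gromov–Witten potential of `ℙ¹_{2,4,4}` (indexed by `r = k+1`, `s = l+1`). -/
noncomputable def Dyz (x : ℂ) : ℂ :=
  ∑' p : ℕ × ℕ,
    (-(4 * ((p.1 : ℂ) + 1) + 4 * ((p.2 : ℂ) + 1) - 2)
        * x ^ (32 * (2 * (p.1 + 1) - 1) * (p.2 + 1))
      + (2 * ((p.1 : ℂ) + 1) + 2 * ((p.2 : ℂ) + 1)) * x ^ (64 * (p.1 + 1) * (p.2 + 1)))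

/-!
Put `S(q) = ∑ σ₁(n) qⁿ = ∑_{d,s} d q^{ds} = ∑_{d,s} s q^{ds}`, so that `E₂ = 1 - 24 S`. With
`q = x³²` and `d = 2r - 1`, the first summand of `D_{yz}` is `-(2d + 4s) q^{ds}`, summed over odd
`d`. A sum over odd `d` is the sum over all `d` minus the sum over `d = 2r`, a series in `q²`:
restricting `∑ d q^{ds}` to odd `d` gives `S(q) - 2 S(q²)`, and `∑ s q^{ds}` gives `S(q) - S(q²)`.
The second summand contributes `4 S(q²)`, hence `D_{yz}(x) = 12 S(q²) - 6 S(q)`.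
-/

section ComplementaryRanges

variable {ι κ κ' M : Type*} [AddCommGroup M] [TopologicalSpace M] [IsTopologicalAddGroup M]

lemma hasSum_comp_of_isCompl_range {f : ι → M} {g : κ → ι} {h : κ' → ι} {a b : M}
    (hg : g.Injective) (hh : h.Injective) (hgh : IsCompl (Set.range g) (Set.range h))
    (hf : HasSum f a) (hfg : HasSum (f ∘ g) b) : HasSum (f ∘ h) (a - b) := by
  rw [← hh.hasSum_range_iff, ← hgh.compl_eq]
  refine (HasSum.hasSum_compl_iff (hg.hasSum_range_iff.mpr hfg)).mpr ?_
  rwa [add_sub_cancel]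

lemma isCompl_range_prodMap_odd_even (β : Type*) :
    IsCompl (Set.range (Prod.map (fun n : ℕ ↦ 2 * n + 1) (id : β → β)))
      (Set.range (Prod.map (fun n : ℕ ↦ 2 * n) (id : β → β))) := by
  simpa [Set.range_prodMap, Set.prod_univ] using
    (Nat.isCompl_even_odd.preimage (Prod.fst : ℕ × β → ℕ)).symm

lemma hasSum_two_mul_fst_of_two_mul_add_one_fst {β : Type*} {f : ℕ × β → M} {a b : M}
    (hf : HasSum f a) (hodd : HasSum (fun p : ℕ × β ↦ f (2 * p.1 + 1, p.2)) b) :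
    HasSum (fun p : ℕ × β ↦ f (2 * p.1, p.2)) (a - b) :=
  hasSum_comp_of_isCompl_range
    (Function.Injective.prodMap (fun _ _ h ↦ by simpa using h) Function.injective_id)
    (Function.Injective.prodMap (fun _ _ h ↦ by simpa using h) Function.injective_id)
    (isCompl_range_prodMap_odd_even β) hf hodd

end ComplementaryRanges

lemma norm_pow_lt_one {R : Type*} [SeminormedRing R] {a : R} {n : ℕ} (hn : n ≠ 0) (ha : ‖a‖ < 1) :
    ‖a ^ n‖ < 1 :=
  (norm_pow_le' a (Nat.pos_of_ne_zero hn)).trans_lt (pow_lt_one₀ (norm_nonneg a) ha hn)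

section DivisorSums

/-- The generating series `∑_{n ≥ 1} σ_k(n) qⁿ` of the divisor power sums, indexed from `n = 0`
as in `E2`. It expresses the double series below and, for `k = 1`, the non-constant part of `E2`. -/
noncomputable def sigmaSeries {R : Type*} [Semiring R] [TopologicalSpace R] (k : ℕ) (q : R) : R :=
  ∑' n : ℕ, (ArithmeticFunction.sigma k (n + 1) : R) * q ^ (n + 1)

variable {𝕜 : Type*} [NontriviallyNormedField 𝕜] [CompleteSpace 𝕜] [NormSMulClass ℤ 𝕜]

lemma hasSum_snd_pow_mul_pow (k : ℕ) {q : 𝕜} (hq : ‖q‖ < 1) :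
    HasSum (fun p : ℕ × ℕ ↦ ((p.2 : 𝕜) + 1) ^ k * q ^ ((p.1 + 1) * (p.2 + 1)))
      (sigmaSeries k q) := by
  have hsummable := summable_prod_mul_pow k hq
  have htsum : ∑' c : ℕ+ × ℕ+, (c.2 : 𝕜) ^ k * q ^ (c.1 * c.2 : ℕ) = sigmaSeries k q := by
    rw [hsummable.tsum_prod, tsum_prod_pow_eq_tsum_sigma k hq]
    exact tsum_pnat_eq_tsum_succ (f := fun n ↦ (ArithmeticFunction.sigma k n : 𝕜) * q ^ n)
  have hpnat := htsum ▸ hsummable.hasSum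
  rw [← (Equiv.pnatEquivNat.symm.prodCongr Equiv.pnatEquivNat.symm).hasSum_iff] at hpnat
  simpa [Function.comp_def] using hpnat

lemma hasSum_fst_pow_mul_pow (k : ℕ) {q : 𝕜} (hq : ‖q‖ < 1) :
    HasSum (fun p : ℕ × ℕ ↦ ((p.1 : 𝕜) + 1) ^ k * q ^ ((p.1 + 1) * (p.2 + 1)))
      (sigmaSeries k q) := by
  have hswap := (Equiv.prodComm ℕ ℕ).hasSum_iff.mpr (hasSum_snd_pow_mul_pow k hq)
  simpa [Function.comp_def, mul_comm] using hswap

lemma hasSum_fst_pow_mul_pow_odd_fst (k : ℕ) {q : 𝕜} (hq : ‖q‖ < 1) :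
    HasSum (fun p : ℕ × ℕ ↦ (2 * (p.1 : 𝕜) + 1) ^ k * q ^ ((2 * p.1 + 1) * (p.2 + 1)))
      (sigmaSeries k q - 2 ^ k * sigmaSeries k (q ^ 2)) := by
  -- The index `n` stands for the factor `n + 1`, so the even factors sit at the odd indices.
  have heven : HasSum
      (fun p : ℕ × ℕ ↦ (((2 * p.1 + 1 : ℕ) : 𝕜) + 1) ^ k * q ^ ((2 * p.1 + 1 + 1) * (p.2 + 1)))
      (2 ^ k * sigmaSeries k (q ^ 2)) := by
    have hsq := hasSum_fst_pow_mul_pow k (norm_pow_lt_one two_ne_zero hq)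
    refine (hsq.mul_left (2 ^ k)).congr_fun fun p ↦ ?_
    rw [← mul_assoc, ← mul_pow, ← pow_mul]
    push_cast
    ring_nf
  have hodd :=
    hasSum_two_mul_fst_of_two_mul_add_one_fst (M := 𝕜) (hasSum_fst_pow_mul_pow k hq) heven
  exact hodd.congr_fun fun p ↦ by push_cast; rfl

lemma hasSum_snd_pow_mul_pow_odd_fst (k : ℕ) {q : 𝕜} (hq : ‖q‖ < 1) :
    HasSum (fun p : ℕ × ℕ ↦ ((p.2 : 𝕜) + 1) ^ k * q ^ ((2 * p.1 + 1) * (p.2 + 1)))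
      (sigmaSeries k q - sigmaSeries k (q ^ 2)) := by
  have heven : HasSum
      (fun p : ℕ × ℕ ↦ ((p.2 : 𝕜) + 1) ^ k * q ^ ((2 * p.1 + 1 + 1) * (p.2 + 1)))
      (sigmaSeries k (q ^ 2)) := by
    refine (hasSum_snd_pow_mul_pow k (norm_pow_lt_one two_ne_zero hq)).congr_fun fun p ↦ ?_
    rw [← pow_mul]
    ring_nf
  have hodd :=
    hasSum_two_mul_fst_of_two_mul_add_one_fst (M := 𝕜) (hasSum_snd_pow_mul_pow k hq) heven
  exact hodd

end DivisorSums

lemma E2_eq_one_sub_sigmaSeries (q : ℂ) : E2 q = 1 - 24 * sigmaSeries 1 q := rfl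

lemma Dyz_eq_sigmaSeries {x : ℂ} (hx : ‖x‖ < 1) :
    Dyz x = 12 * sigmaSeries 1 (x ^ 64) - 6 * sigmaSeries 1 (x ^ 32) := by
  have hq : ‖x ^ 32‖ < 1 := norm_pow_lt_one (by norm_num) hx
  have hq2 : ‖x ^ 64‖ < 1 := norm_pow_lt_one (by norm_num) hx
  have hodd := ((hasSum_fst_pow_mul_pow_odd_fst 1 hq).mul_left 2).add
    ((hasSum_snd_pow_mul_pow_odd_fst 1 hq).mul_left 4)
  have hall := ((hasSum_fst_pow_mul_pow 1 hq2).mul_left 2).add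
    ((hasSum_snd_pow_mul_pow 1 hq2).mul_left 2)
  calc
    Dyz x = _ := tsum_congr fun p ↦ by
      rw [show 2 * (p.1 + 1) - 1 = 2 * p.1 + 1 by omega, ← pow_mul, ← pow_mul]
      ring
    _ = _ := (hodd.neg.add hall).tsum_eq
    _ = 12 * sigmaSeries 1 (x ^ 64) - 6 * sigmaSeries 1 (x ^ 32) := by
      rw [← pow_mul]
      ring

/-- `D_{yz}(x) = (1 + E₂(x³²) − 2E₂(x⁶⁴))/4` for `|x| < 1`. -/
theorem Dyz_eq_eisenstein (x : ℂ) (hx : ‖x‖ < 1) :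
    Dyz x = (1 + E2 (x ^ 32) - 2 * E2 (x ^ 64)) / 4 := by
  rw [Dyz_eq_sigmaSeries hx, E2_eq_one_sub_sigmaSeries, E2_eq_one_sub_sigmaSeries]
  ring
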